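/- arXiv:2603.27248 — 5 statements merged into one kernel-verified Lean document; each statement's English description precedes it below -/
import Mathlib

section
/- Let r ≥ 1 be an integer, let L_1 > L_2 > ... > L_r > 0 be integers, let m_1, ..., m_r ≥ 1 be integers, and set n = Σ_{i=1}^r m_i·L_i. Define the gaps g_i := L_i − L_{i+1} for 1 ≤ i < r and g_r := L_r, and set A := #{i ∈ {1,...,r} : g_i > 1} and B := #{i ∈ {1,...,r} : m_i > 1}. Then A + B ≤ n − T_r, where T_r = r(r+1)/2. -/
/-!
The bound holds term by term. Since the `L i` strictly decrease to a positive `L r`, one has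
`r + 1 - i ≤ L i` (`le_part`), and a gap `g i > 1` improves this by one because the same bound
applies to `L (i + 1) = L i - g i`. A multiplicity `m i > 1` contributes at least one further copy
of `L i ≥ 1`. Hence `m i * L i ≥ (r + 1 - i) + [g i > 1] + [m i > 1]`; summing over `i`, the first
terms add up to `T r` (`sum_staircase`) and the indicators to `A + B`.
-/

namespace PartitionDegree

/-- The `m`-th triangular number. -/
def T (m : ℕ) : ℕ := m * (m + 1) / 2

/-- The number of distinct part sizes of a partition. -/
def supp {n : ℕ} (lam : n.Partition) : ℕ := lam.parts.toFinset.card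

/-- The gap-bonus count: distinct part sizes `L ≥ 2` such that `L - 1` is not a part size. -/
def gapBonus {n : ℕ} (lam : n.Partition) : ℕ :=
  (lam.parts.toFinset.filter (fun L => 2 ≤ L ∧ (L - 1) ∉ lam.parts)).card

/-- The multiplicity-bonus count: distinct part sizes occurring with multiplicity at least 2. -/
def multBonus {n : ℕ} (lam : n.Partition) : ℕ :=
  (lam.parts.toFinset.filter (fun L => 2 ≤ lam.parts.count L)).card

/-- The degree of a partition in the partition graph. -/
def deg {n : ℕ} (lam : n.Partition) : ℕ :=
  supp lam * (supp lam - 1) + gapBonus lam + multBonus lam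

/-- The maximal degree over all partitions of `n`. -/
def maxDeg (n : ℕ) : ℕ := Finset.univ.sup (fun lam : n.Partition => deg lam)

/-- `ρ(q)`: the maximum of `a + b` over pairs with `T a + T b ≤ q`. -/
noncomputable def rho (q : ℕ) : ℕ := sSup {c : ℕ | ∃ a b : ℕ, c = a + b ∧ T a + T b ≤ q}

/-- `mu` is the conjugate of `lam`: for each `k ≥ 1`, the multiplicity of `k` in `mu`
equals (number of parts of `lam` that are `≥ k`) minus (number of parts `≥ k + 1`). -/
def IsConjugate {n : ℕ} (lam mu : n.Partition) : Prop :=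
  ∀ k : ℕ, 1 ≤ k →
    mu.parts.count k =
      Multiset.countP (fun p => k ≤ p) lam.parts -
        Multiset.countP (fun p => k + 1 ≤ p) lam.parts

theorem le_part (r : ℕ) (L : ℕ → ℕ)
    (hL : ∀ i ∈ Finset.Icc 1 r, ∀ j ∈ Finset.Icc 1 r, i < j → L j < L i)
    (hLpos : ∀ i ∈ Finset.Icc 1 r, 0 < L i) (d : ℕ) :
    ∀ i, 1 ≤ i → i + d = r → d + 1 ≤ L i := by
  induction d with
  | zero =>
    intro i hi hd
    exact hLpos i (Finset.mem_Icc.2 ⟨hi, by omega⟩)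
  | succ d ih =>
    intro i hi hd
    have h1 := ih (i + 1) (by omega) (by omega)
    have h2 := hL i (Finset.mem_Icc.2 ⟨hi, by omega⟩) (i + 1)
      (Finset.mem_Icc.2 ⟨by omega, by omega⟩) (by omega)
    omega

theorem sum_staircase (r : ℕ) : ∑ i ∈ Finset.Icc 1 r, (r + 1 - i) = T r := by
  induction r with
  | zero => simp [T]
  | succ r ih =>
    -- Going from `r` to `r + 1` raises every summand by one and appends a last summand `1`.
    have h : ∑ i ∈ Finset.Icc 1 r, (r + 1 + 1 - i) = ∑ i ∈ Finset.Icc 1 r, ((r + 1 - i) + 1) :=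
      Finset.sum_congr rfl fun i hi => by
        have := (Finset.mem_Icc.1 hi).2
        omega
    rw [Finset.sum_Icc_succ_top (by omega), h, Finset.sum_add_distrib, ih]
    simp only [T, Finset.sum_const, Nat.card_Icc, smul_eq_mul]
    have e : (r + 1) * (r + 1 + 1) = r * (r + 1) + 2 * (r + 1) := by ring
    omega

/-- the bonus bound `A + B ≤ n - T r` for a partition in compressed form. -/
theorem bonus_bound (r : ℕ) (hr : 1 ≤ r) (L m : ℕ → ℕ)
    (hL : ∀ i ∈ Finset.Icc 1 r, ∀ j ∈ Finset.Icc 1 r, i < j → L j < L i)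
    (hLpos : ∀ i ∈ Finset.Icc 1 r, 0 < L i)
    (hm : ∀ i ∈ Finset.Icc 1 r, 1 ≤ m i)
    (n : ℕ) (hn : n = ∑ i ∈ Finset.Icc 1 r, m i * L i)
    (g : ℕ → ℕ)
    (hg : ∀ i ∈ Finset.Icc 1 (r - 1), g i = L i - L (i + 1))
    (hgr : g r = L r)
    (A B : ℕ)
    (hA : A = ((Finset.Icc 1 r).filter (fun i => 1 < g i)).card)
    (hB : B = ((Finset.Icc 1 r).filter (fun i => 1 < m i)).card) :
    A + B ≤ n - T r := by
  have key : ∀ i ∈ Finset.Icc 1 r,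
      (r + 1 - i) + ((if 1 < g i then 1 else 0) + (if 1 < m i then 1 else 0)) ≤ m i * L i := by
    intro i hi
    obtain ⟨h1, h2⟩ := Finset.mem_Icc.1 hi
    have hi_part := le_part r L hL hLpos (r - i) i h1 (by omega)
    have hgap : (r + 1 - i) + (if 1 < g i then 1 else 0) ≤ L i := by
      rcases Nat.lt_or_ge i r with hlt | hge
      · have hnext := le_part r L hL hLpos (r - (i + 1)) (i + 1) (by omega) (by omega)
        have hgi := hg i (Finset.mem_Icc.2 ⟨h1, by omega⟩)
        split_ifs <;> omega
      · obtain rfl : i = r := by omega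
        split_ifs <;> omega
    have hmult : L i + (if 1 < m i then 1 else 0) ≤ m i * L i := by
      have hmi := hm i hi
      split_ifs with h
      · nlinarith
      · nlinarith
    omega
  have hsum := Finset.sum_le_sum key
  rw [Finset.sum_add_distrib, Finset.sum_add_distrib, sum_staircase, ← Finset.card_filter,
    ← Finset.card_filter, ← hA, ← hB, ← hn] at hsum
  omega

end PartitionDegree
end

section
/- Let n ≥ 1 and let λ be a partition of n with r = supp(λ) distinct part sizes. Then A(λ) = 0 and B(λ) = 0 if and only if λ is the staircase partition δ_r = (r, r−1, ..., 1) (equivalently, n = r(r+1)/2 and the parts of λ are exactly r, r−1, ..., 1, each with multiplicity one). -/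
/-!
The vanishing of the multiplicity bonus says that the parts form a set, and the vanishing of the
gap bonus says that this set `S` of positive integers is closed under `L ↦ L - 1` for `L ≥ 2`.
Such a set contains `{1, …, L}` together with each element `L`, so `L ≤ |S|`; hence
`S ⊆ {1, …, |S|}`, and equality follows by comparing cardinalities
(`eq_Icc_card_of_pred_closed`). The converse is immediate.
-/

namespace PartitionDegree

/-- A finite set of positive integers closed under predecessor (as long as the predecessor is
positive) is an initial segment `{1, …, r}`. -/
theorem eq_Icc_card_of_pred_closed (S : Finset ℕ) (hpos : ∀ L ∈ S, 0 < L)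
    (hpred : ∀ L ∈ S, 2 ≤ L → L - 1 ∈ S) : S = Finset.Icc 1 S.card := by
  have hdown : ∀ L ∈ S, Finset.Icc 1 L ⊆ S := by
    intro L
    induction L with
    | zero => simp
    | succ k ih =>
      intro hk x hx
      rw [Finset.mem_Icc] at hx
      rcases Nat.lt_or_ge k x with h | h
      · have : x = k + 1 := by omega
        rwa [this]
      · have hk' : k ∈ S := by simpa using hpred (k + 1) hk (by omega)
        exact ih hk' (Finset.mem_Icc.2 ⟨hx.1, h⟩)
  apply Finset.eq_of_subset_of_card_le
  · intro L hL
    have h := Finset.card_le_card (hdown L hL)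
    rw [Nat.card_Icc] at h
    exact Finset.mem_Icc.2 ⟨hpos L hL, by omega⟩
  · simp

/-- `A(λ) = 0` and `B(λ) = 0` iff `λ` is the staircase partition `δ_r`,
where `r = supp λ`, i.e. the parts of `λ` are exactly `r, r-1, …, 1`, each once. -/
theorem bonus_zero_iff_staircase (n : ℕ) (hn : 1 ≤ n) (lam : n.Partition) :
    (gapBonus lam = 0 ∧ multBonus lam = 0) ↔
      lam.parts = (Finset.Icc 1 (supp lam)).val := by
  constructor
  · rintro ⟨hA, hB⟩
    rw [gapBonus, Finset.card_eq_zero, Finset.filter_eq_empty_iff] at hA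
    rw [multBonus, Finset.card_eq_zero, Finset.filter_eq_empty_iff] at hB
    have hnodup : lam.parts.Nodup := by
      rw [Multiset.nodup_iff_count_le_one]
      intro L
      by_cases hL : L ∈ lam.parts
      · have := hB (Multiset.mem_toFinset.2 hL)
        omega
      · simp [Multiset.count_eq_zero_of_notMem hL]
    have hS := eq_Icc_card_of_pred_closed lam.parts.toFinset
      (fun L hL => lam.parts_pos (Multiset.mem_toFinset.1 hL))
      (fun L hL h2 => Multiset.mem_toFinset.2 (by_contra fun h => hA hL ⟨h2, h⟩))
    rw [supp, ← hS, Multiset.toFinset_val, hnodup.dedup]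
  · intro h
    have hnodup : lam.parts.Nodup := h ▸ (Finset.Icc 1 (supp lam)).nodup
    have hmem : ∀ L, L ∈ lam.parts ↔ 1 ≤ L ∧ L ≤ supp lam := fun L => by
      conv_lhs => rw [h]
      rw [Finset.mem_val, Finset.mem_Icc]
    constructor
    · rw [gapBonus, Finset.card_eq_zero, Finset.filter_eq_empty_iff]
      rintro L hL ⟨h2, hn1⟩
      rw [Multiset.mem_toFinset, hmem] at hL
      rw [hmem] at hn1
      omega
    · rw [multBonus, Finset.card_eq_zero, Finset.filter_eq_empty_iff]
      intro L _
      have := Multiset.nodup_iff_count_le_one.1 hnodup L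
      omega

end PartitionDegree
end

section
/- Let s ≥ 1 and n = T_s = s(s+1)/2. Then every partition λ of n satisfies deg(λ) ≤ s(s−1), and equality holds if and only if λ is the staircase partition δ_s = (s, s−1, ..., 1). In particular Δ_n = s(s−1) and the staircase is the unique degree-maximizing partition of n. -/
/-!
Let `S` be the set of part sizes of `λ`, with `r = |S|`, `a` gap bonuses and `b` multiplicity
bonuses. Listing `S` increasingly, the `i`-th element is at least `i` plus the number of gaps met so
far, so `∑ S ≥ T r + T a` (`gap_sum_bound`). The sizes occurring at least twice contribute a further
`b` distinct positive integers, hence at least `T b`. Altogether `T r + T a + T b ≤ n = T s`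
(`triangle_bound`).

If `r = s`, this forces `a = b = 0`: no size repeats and no gap occurs, so `λ` is the staircase. If
`r < s`, then `a + b ≤ T a + T b ≤ T s - T r`, which is less than `s(s-1) - r(r-1)` except when
`r = 1`, `s = 2`, where `a = b = 1` would give equality. That case cannot occur, since a
single part size `L ≥ 2` taken at least twice has sum at least `4 > 3`.
-/

namespace PartitionDegree

lemma two_mul_T (m : ℕ) : 2 * T m = m * (m + 1) :=
  Nat.mul_div_cancel' (Nat.even_mul_succ_self m).two_dvd

/-- The elements `L ≥ 2` of `S` for which `L - 1` is not in `S`. -/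
def gaps (S : Finset ℕ) : Finset ℕ := S.filter (fun L => 2 ≤ L ∧ (L - 1) ∉ S)

lemma gaps_insert (S : Finset ℕ) (m : ℕ) (hm : ∀ x ∈ S, x < m) :
    gaps (insert m S) = if 2 ≤ m ∧ (m - 1) ∉ S then insert m (gaps S) else gaps S := by
  ext x
  have h1 : ∀ x ∈ S, x - 1 ≠ m := fun x hx => by have := hm x hx; omega
  split_ifs with h
  · simp only [gaps, Finset.mem_filter, Finset.mem_insert]
    grind
  · simp only [gaps, Finset.mem_filter, Finset.mem_insert]
    grind

/-- A finite set of positive integers with `r` elements and `a` gaps has sum at least `T r + T a`.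
The first conjunct says that its maximum (or `0`, if it is empty) is at least `r + a`; it carries
the induction on the maximum. -/
lemma gap_sum_bound (S : Finset ℕ) (hS : ∀ x ∈ S, 0 < x) :
    (∃ y ∈ insert 0 S, S.card + (gaps S).card ≤ y) ∧
      S.card * (S.card + 1) + (gaps S).card * ((gaps S).card + 1) ≤ 2 * ∑ x ∈ S, x := by
  induction S using Finset.induction_on_max with
  | empty => simp [gaps]
  | insert m S hm ih =>
    obtain ⟨⟨y, hy, hry⟩, hsum⟩ := ih (fun x hx => hS x (Finset.mem_insert_of_mem hx))
    have hmS : m ∉ S := fun h => lt_irrefl _ (hm m h)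
    have hmpos : 0 < m := hS m (Finset.mem_insert_self _ _)
    have hym : y < m := by
      rcases Finset.mem_insert.1 hy with rfl | h
      · exact hmpos
      · exact hm y h
    rw [gaps_insert S m hm, Finset.card_insert_of_notMem hmS, Finset.sum_insert hmS]
    split_ifs with h
    · have hmg : m ∉ gaps S := fun h => hmS (Finset.mem_filter.1 h).1
      -- A gap below `m` separates `m` from the previous maximum by at least `2`.
      have hne : y ≠ m - 1 := by
        rintro rfl
        rcases Finset.mem_insert.1 hy with h0 | h0
        · omega
        · exact h.2 h0
      rw [Finset.card_insert_of_notMem hmg]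
      refine ⟨⟨m, by simp, by omega⟩, ?_⟩
      have : S.card + (gaps S).card + 2 ≤ m := by omega
      nlinarith
    · refine ⟨⟨m, by simp, by omega⟩, ?_⟩
      have : S.card + (gaps S).card + 1 ≤ m := by omega
      nlinarith

lemma gapBonus_eq {n : ℕ} (lam : n.Partition) : gapBonus lam = (gaps lam.parts.toFinset).card := by
  simp [gapBonus, gaps]

lemma sum_split {n : ℕ} (lam : n.Partition) :
    ∑ x ∈ lam.parts.toFinset, x +
      ∑ x ∈ lam.parts.toFinset.filter (fun L => 2 ≤ lam.parts.count L), x ≤ n := by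
  conv_rhs => rw [← lam.parts_sum, Finset.sum_multiset_count]
  rw [Finset.sum_filter, ← Finset.sum_add_distrib]
  refine Finset.sum_le_sum fun x hx => ?_
  have hc : 1 ≤ lam.parts.count x := Multiset.one_le_count_iff_mem.2 (Multiset.mem_toFinset.1 hx)
  rw [smul_eq_mul]
  split_ifs with h <;> nlinarith

/-- The inequality `T r + T a + T b ≤ n`, doubled. -/
lemma triangle_bound {n : ℕ} (lam : n.Partition) :
    supp lam * (supp lam + 1) + gapBonus lam * (gapBonus lam + 1)
      + multBonus lam * (multBonus lam + 1) ≤ 2 * n := by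
  have hpos : ∀ x ∈ lam.parts.toFinset, 0 < x :=
    fun x hx => lam.parts_pos (Multiset.mem_toFinset.1 hx)
  have h1 := (gap_sum_bound _ hpos).2
  have h2 := (gap_sum_bound (lam.parts.toFinset.filter (fun L => 2 ≤ lam.parts.count L))
    (fun x hx => hpos x (Finset.mem_filter.1 hx).1)).2
  have h3 := sum_split lam
  rw [gapBonus_eq]
  unfold supp multBonus
  linarith [Nat.zero_le ((gaps (lam.parts.toFinset.filter (fun L => 2 ≤ lam.parts.count L))).card *
    ((gaps (lam.parts.toFinset.filter (fun L => 2 ≤ lam.parts.count L))).card + 1))]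

/-- If the support is a singleton `{L}` and both bonuses occur, then `L ≥ 2` is repeated. -/
lemma four_le_of_supp_one {n : ℕ} (lam : n.Partition) (hr : supp lam = 1)
    (ha : 0 < gapBonus lam) (hb : 0 < multBonus lam) : 4 ≤ n := by
  obtain ⟨L, hL⟩ := Finset.card_eq_one.1 hr
  obtain ⟨x, hx⟩ := Finset.card_pos.1 ha
  obtain ⟨y, hy⟩ := Finset.card_pos.1 hb
  have h := sum_split lam
  rw [Finset.mem_filter, hL, Finset.mem_singleton] at hx
  have hy1 := (Finset.mem_filter.1 hy).1
  rw [hL, Finset.mem_singleton] at hy1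
  have h2 := Finset.single_le_sum (f := fun x : ℕ => x) (fun i _ => Nat.zero_le i) hy
  have h3 : ∑ x ∈ lam.parts.toFinset, x = L := by rw [hL, Finset.sum_singleton]
  omega

lemma supp_pos {n : ℕ} (hn : 0 < n) (lam : n.Partition) : 0 < supp lam := by
  rw [supp, Finset.card_pos, Multiset.toFinset_nonempty]
  intro h
  have := lam.parts_sum
  simp [h] at this
  omega

lemma bonus_eq_zero {s : ℕ} (lam : (T s).Partition) (hr : supp lam = s) :
    gapBonus lam = 0 ∧ multBonus lam = 0 := by
  have h := triangle_bound lam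
  rw [two_mul_T, hr] at h
  constructor <;> nlinarith

lemma supp_le {s : ℕ} (lam : (T s).Partition) : supp lam ≤ s := by
  have h := triangle_bound lam
  rw [two_mul_T] at h
  by_contra! hlt
  nlinarith

lemma deg_lt {s : ℕ} (hs : 1 ≤ s) (lam : (T s).Partition) (hr : supp lam < s) :
    deg lam < s * (s - 1) := by
  have h := triangle_bound lam
  have hT := two_mul_T s
  have hTpos : 0 < T s := by nlinarith
  have hpos := supp_pos hTpos lam
  have h4 := four_le_of_supp_one lam
  unfold deg
  generalize supp lam = r at *
  generalize gapBonus lam = a at *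
  generalize multBonus lam = b at *
  obtain ⟨q, rfl⟩ : ∃ q, r = q + 1 := ⟨r - 1, by omega⟩
  obtain ⟨d, rfl⟩ : ∃ d, s = q + 1 + d + 1 := ⟨s - (q + 1) - 1, by omega⟩
  simp only [Nat.add_sub_cancel]
  have ha : 2 * a ≤ a * (a + 1) := by rcases a with _ | a <;> nlinarith
  have hb : 2 * b ≤ b * (b + 1) := by rcases b with _ | b <;> nlinarith
  rcases Nat.eq_zero_or_pos (q + d) with h0 | h0
  · obtain ⟨rfl, rfl⟩ : q = 0 ∧ d = 0 := by omega
    have ha2 : a ≤ 1 := by nlinarith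
    have hb2 : b ≤ 1 := by nlinarith
    have h5 : ¬ (0 < a ∧ 0 < b) := fun h' => by
      have := h4 rfl h'.1 h'.2
      omega
    omega
  · nlinarith [Nat.zero_le (q * d), Nat.zero_le (d * d)]

/-- Full support forces the staircase: without gaps the support is an initial segment. -/
lemma parts_eq_of_supp {s : ℕ} (lam : (T s).Partition) (hr : supp lam = s) :
    lam.parts = (Finset.Icc 1 s).val := by
  obtain ⟨ha, hb⟩ := bonus_eq_zero lam hr
  have hnodup : lam.parts.Nodup := by
    rw [Multiset.nodup_iff_count_le_one]
    intro x
    by_contra! hx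
    have hmem : x ∈ lam.parts := Multiset.count_pos.1 (by omega)
    rw [multBonus, Finset.card_eq_zero] at hb
    exact Finset.notMem_empty x (hb ▸ Finset.mem_filter.2 ⟨Multiset.mem_toFinset.2 hmem, hx⟩)
  have hdown : ∀ x ∈ lam.parts.toFinset, 2 ≤ x → x - 1 ∈ lam.parts.toFinset := by
    intro x hx h2
    by_contra hx'
    rw [gapBonus_eq, Finset.card_eq_zero] at ha
    exact Finset.notMem_empty x (ha ▸ Finset.mem_filter.2 ⟨hx, h2, hx'⟩)
  have hIcc : ∀ x ∈ lam.parts.toFinset, Finset.Icc 1 x ⊆ lam.parts.toFinset := by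
    intro x
    induction x with
    | zero => simp
    | succ k ih =>
      intro hx y hy
      rw [Finset.mem_Icc] at hy
      rcases Nat.lt_or_ge k y with h | h
      · obtain rfl : y = k + 1 := by omega
        exact hx
      · exact ih (hdown _ hx (by omega)) (Finset.mem_Icc.2 ⟨hy.1, h⟩)
  have hsub : lam.parts.toFinset ⊆ Finset.Icc 1 s := by
    intro x hx
    have h1 := Finset.card_le_card (hIcc x hx)
    rw [Nat.card_Icc] at h1
    have h2 : lam.parts.toFinset.card = s := hr
    exact Finset.mem_Icc.2 ⟨lam.parts_pos (Multiset.mem_toFinset.1 hx), by omega⟩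
  have heq : lam.parts.toFinset = Finset.Icc 1 s := by
    refine Finset.eq_of_subset_of_card_le hsub ?_
    have h2 : lam.parts.toFinset.card = s := hr
    simp [h2]
  rw [← heq, Multiset.toFinset_val, hnodup.dedup]

lemma deg_of_supp {s : ℕ} (lam : (T s).Partition) (hr : supp lam = s) :
    deg lam = s * (s - 1) := by
  obtain ⟨ha, hb⟩ := bonus_eq_zero lam hr
  rw [deg, ha, hb, hr]
  omega

lemma supp_of_parts {s : ℕ} (lam : (T s).Partition) (h : lam.parts = (Finset.Icc 1 s).val) :
    supp lam = s := by
  simp [supp, h]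

/-- The partition with parts `1, …, s`, each occurring once. -/
def staircase (s : ℕ) : (T s).Partition where
  parts := (Finset.Icc 1 s).val
  parts_pos := by
    intro i hi
    rw [Finset.mem_val, Finset.mem_Icc] at hi
    omega
  parts_sum := by
    have h : 2 * ∑ i ∈ Finset.Icc 1 s, i = s * (s + 1) := by
      induction s with
      | zero => simp
      | succ k ih =>
        rw [Finset.sum_Icc_succ_top (by omega), mul_add, ih]
        ring
    have h2 : (Finset.Icc 1 s).val.sum = ∑ i ∈ Finset.Icc 1 s, i :=
      Finset.sum_val _
    have := two_mul_T s
    omega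

/-- for `n = T s`, every partition of `n` has degree at most `s(s-1)`,
with equality exactly for the staircase `δ_s`; in particular `Δ_n = s(s-1)`. -/
theorem triangular_max (s : ℕ) (hs : 1 ≤ s) :
    (∀ lam : (T s).Partition, deg lam ≤ s * (s - 1)) ∧
      (∀ lam : (T s).Partition,
        deg lam = s * (s - 1) ↔ lam.parts = (Finset.Icc 1 s).val) ∧
      maxDeg (T s) = s * (s - 1) := by
  have hle : ∀ lam : (T s).Partition, deg lam ≤ s * (s - 1) := by
    intro lam
    rcases (supp_le lam).lt_or_eq with h | h
    · exact (deg_lt hs lam h).le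
    · exact (deg_of_supp lam h).le
  refine ⟨hle, fun lam => ⟨fun h => ?_, fun h => deg_of_supp lam (supp_of_parts lam h)⟩, ?_⟩
  · rcases (supp_le lam).lt_or_eq with h' | h'
    · exact absurd h (deg_lt hs lam h').ne
    · exact parts_eq_of_supp lam h'
  · refine le_antisymm (Finset.sup_le fun lam _ => hle lam) ?_
    rw [← deg_of_supp (staircase s) (supp_of_parts _ rfl)]
    exact Finset.le_sup (f := fun lam : (T s).Partition => deg lam) (Finset.mem_univ _)

end PartitionDegree
end

section
/- For every natural number q, the quantity ρ(q) := max{a + b : a, b ∈ ℕ, T_a + T_b ≤ q} satisfies ρ(q) = ⌊√(4q+1)⌋ − 1. Equivalently, ρ(q) is the largest integer c ≥ 0 such that ⌊(c+1)²/4⌋ ≤ q. -/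
/-!
The identity `4 (T a + T b) + 1 = (a + b + 1)² + (a - b)²` bounds `(a + b + 1)²` by `4 q + 1`
whenever `T a + T b ≤ q`. Conversely, for given `c = a + b`, the balanced choice `a = ⌊c / 2⌋`,
`b = c - a` has `(a - b)² ≤ 1`, and parity shows it is admissible as soon as
`(c + 1)² ≤ 4 q + 1`. Hence `c` is attained iff `(c + 1)² ≤ 4 q + 1` (`exists_add_iff`), i.e. iff
`c ≤ ⌊√(4 q + 1)⌋ - 1`. Squares being `0` or `1` mod `4`, this is also `⌊(c + 1)² / 4⌋ ≤ q`.
-/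

namespace PartitionDegree

/-- Attainability of `c` as a sum `a + b`, with the extremal pair being the balanced one. -/
lemma exists_add_iff (q c : ℕ) :
    (∃ a b : ℕ, c = a + b ∧ T a + T b ≤ q) ↔ (c + 1) ^ 2 ≤ 4 * q + 1 := by
  constructor
  · rintro ⟨a, b, rfl, h⟩
    have ha := two_mul_T a
    have hb := two_mul_T b
    zify at *
    nlinarith [sq_nonneg ((a : ℤ) - b)]
  · intro h
    obtain ⟨k, rfl | rfl⟩ := Nat.even_or_odd' c
    · refine ⟨k, k, by ring, ?_⟩
      have hk := two_mul_T k
      nlinarith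
    · refine ⟨k, k + 1, by ring, ?_⟩
      have hk := two_mul_T k
      have hk' := two_mul_T (k + 1)
      -- Here `4 (T k + T (k + 1)) = (c + 1) ^ 2`, so the slack `1` is removed by divisibility by `4`.
      have h4 : (2 * k + 1 + 1) ^ 2 = 4 * (T k + T (k + 1)) := by nlinarith
      omega

lemma sq_div_four_le_iff (q n : ℕ) : n ^ 2 / 4 ≤ q ↔ n ^ 2 ≤ 4 * q + 1 := by
  have hmod : n ^ 2 % 4 = 0 ∨ n ^ 2 % 4 = 1 := by
    have : n % 4 < 4 := Nat.mod_lt _ (by norm_num)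
    rw [Nat.pow_mod]
    interval_cases n % 4 <;> simp
  omega

lemma sq_le_iff_le_sqrt_sub_one (q c : ℕ) :
    (c + 1) ^ 2 ≤ 4 * q + 1 ↔ c ≤ Nat.sqrt (4 * q + 1) - 1 := by
  have hpos : 0 < Nat.sqrt (4 * q + 1) := Nat.sqrt_pos.mpr (by omega)
  rw [← Nat.le_sqrt']
  omega

/-- explicit formula `ρ(q) = ⌊√(4q+1)⌋ - 1`; equivalently, `ρ(q)` is the
largest `c` with `⌊(c+1)²/4⌋ ≤ q`. -/
theorem rho_explicit (q : ℕ) :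
    rho q = Nat.sqrt (4 * q + 1) - 1 ∧
      IsGreatest {c : ℕ | (c + 1) ^ 2 / 4 ≤ q} (rho q) := by
  have hrho : rho q = Nat.sqrt (4 * q + 1) - 1 := by
    have hset : {c : ℕ | ∃ a b : ℕ, c = a + b ∧ T a + T b ≤ q} =
        Set.Iic (Nat.sqrt (4 * q + 1) - 1) := by
      ext c
      exact (exists_add_iff q c).trans (sq_le_iff_le_sqrt_sub_one q c)
    rw [rho, hset, csSup_Iic]
  refine ⟨hrho, ?_⟩
  have hset : {c : ℕ | (c + 1) ^ 2 / 4 ≤ q} = Set.Iic (Nat.sqrt (4 * q + 1) - 1) := by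
    ext c
    exact (sq_div_four_le_iff q (c + 1)).trans (sq_le_iff_le_sqrt_sub_one q c)
  rw [hset, hrho]
  exact isGreatest_Iic

end PartitionDegree
end

section
/- Let s ≥ 1, let 0 ≤ q ≤ s, and set n = T_s + q. Then Δ_n = s(s−1) + ⌊√(4q+1)⌋ − 1. -/
/-!
Write `r`, `a`, `b` for the support, the gap bonus and the multiplicity bonus of a partition `λ`
of `n`. The key inequality is `T r + T a + T b ≤ n` (`triangular_bound`). The `b` repeated part
sizes contribute at least one extra copy each, of total size at least `T b`. The underlying set of
`r` part sizes has sum at least `T r + T a` (`sum_bound`): by induction on the largest element `m`,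
using `m ≥ r + a`, which holds since the `r` sizes and the `a` missing predecessors are distinct
elements of `[1, m]`.

Upper bound: for `n = T s + q` with `q ≤ s` we get `r ≤ s`. If `r < s`, then
`deg λ ≤ r (r - 1) + 2 r = r (r + 1) ≤ s (s - 1)`. If `r = s`, then `T a + T b ≤ q`, and since
`(a + b + 1) ^ 2 ≤ 4 (T a + T b) + 1`, we get `a + b ≤ √(4 q + 1) - 1`.

Lower bound: with `c = ⌊√(4 q + 1)⌋ - 1`, `a = ⌊c / 2⌋`, `b = ⌈c / 2⌉` one has `T a + T b ≤ q`. Take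
the part sizes `1, …, s - a` and `s - a + 2, s - a + 4, …, s + a`, repeat `1, …, b` once more, and
add copies of `1` until the sum is `T s + q`.
-/

namespace PartitionDegree

lemma T_succ (m : ℕ) : T (m + 1) = T m + (m + 1) := by
  have h1 := two_mul_T m
  have h2 := two_mul_T (m + 1)
  nlinarith

lemma T_mono {a b : ℕ} (h : a ≤ b) : T a ≤ T b := by
  have h1 := two_mul_T a
  have h2 := two_mul_T b
  nlinarith

/-- The elements of `S` and the missing predecessors are distinct elements of `[1, m]`. -/
lemma card_add_gaps_le (S : Finset ℕ) (m : ℕ) (hpos : ∀ x ∈ S, 1 ≤ x) (hm : ∀ x ∈ S, x ≤ m) :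
    S.card + (gaps S).card ≤ m := by
  have hinj : Set.InjOn (fun L : ℕ => L - 1) (gaps S : Set ℕ) := by
    intro x hx y hy hxy
    simp only [gaps, Finset.coe_filter, Set.mem_ofPred_eq] at hx hy hxy
    omega
  rw [← Finset.card_image_of_injOn hinj, ← Finset.card_union_of_disjoint]
  · calc _ ≤ (Finset.Icc 1 m).card := by
          apply Finset.card_le_card
          intro x hx
          simp only [gaps, Finset.mem_union, Finset.mem_image, Finset.mem_filter] at hx
          rw [Finset.mem_Icc]
          rcases hx with hx | ⟨y, ⟨hy, hy2, -⟩, rfl⟩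
          · exact ⟨hpos x hx, hm x hx⟩
          · have := hm y hy
            omega
      _ = m := by simp
  · rw [Finset.disjoint_right]
    intro x hx
    simp only [gaps, Finset.mem_image, Finset.mem_filter] at hx
    obtain ⟨y, ⟨_, _, h⟩, rfl⟩ := hx
    exact h

lemma sum_bound (S : Finset ℕ) (hpos : ∀ x ∈ S, 1 ≤ x) :
    T S.card + T (gaps S).card ≤ ∑ x ∈ S, x := by
  induction S using Finset.induction_on_max with
  | empty => simp [gaps, T]
  | insert m S hlt ih =>
    have hmem : m ∉ S := fun h => lt_irrefl _ (hlt m h)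
    have ih := ih (fun x hx => hpos x (Finset.mem_insert_of_mem hx))
    have hle := card_add_gaps_le (insert m S) m hpos (by
      intro x hx
      rcases Finset.mem_insert.1 hx with rfl | hx
      · exact le_rfl
      · exact (hlt x hx).le)
    have hg : (gaps (insert m S)).card ≤ (gaps S).card + 1 := by
      refine (Finset.card_le_card ?_).trans (Finset.card_insert_le m (gaps S))
      intro x hx
      simp only [gaps, Finset.mem_filter, Finset.mem_insert] at hx ⊢
      tauto
    rw [Finset.sum_insert hmem]
    rw [Finset.card_insert_of_notMem hmem] at hle ⊢
    rw [T_succ]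
    rcases Nat.lt_or_ge (gaps S).card (gaps (insert m S)).card with h | h
    · have h' : (gaps (insert m S)).card = (gaps S).card + 1 := by omega
      rw [h'] at hle ⊢
      rw [T_succ]
      omega
    · have := T_mono h
      omega

lemma T_card_le_sum (S : Finset ℕ) (hpos : ∀ x ∈ S, 1 ≤ x) : T S.card ≤ ∑ x ∈ S, x :=
  (Nat.le_add_right _ _).trans (sum_bound S hpos)

lemma triangular_bound {n : ℕ} (lam : n.Partition) :
    T (supp lam) + T (gapBonus lam) + T (multBonus lam) ≤ n := by
  have hpos : ∀ x ∈ lam.parts.toFinset, 1 ≤ x := fun x hx =>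
    lam.parts_pos (Multiset.mem_toFinset.1 hx)
  have h1 := sum_bound lam.parts.toFinset hpos
  have h2 := T_card_le_sum (lam.parts.toFinset.filter (fun L => 2 ≤ lam.parts.count L))
    (fun x hx => hpos x (Finset.mem_filter.1 hx).1)
  have hgap : (gaps lam.parts.toFinset).card = gapBonus lam := by
    simp [gaps, gapBonus]
  rw [hgap] at h1
  have hsum : (∑ x ∈ lam.parts.toFinset, x)
      + ∑ x ∈ lam.parts.toFinset.filter (fun L => 2 ≤ lam.parts.count L), x ≤ n := by
    conv_rhs => rw [← lam.parts_sum, Finset.sum_multiset_count]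
    rw [Finset.sum_filter, ← Finset.sum_add_distrib]
    apply Finset.sum_le_sum
    intro x hx
    have : 1 ≤ lam.parts.count x := Multiset.one_le_count_iff_mem.2 (Multiset.mem_toFinset.1 hx)
    rw [smul_eq_mul]
    split_ifs with h <;> nlinarith
  unfold supp multBonus
  omega

lemma deg_le (s q : ℕ) (hqs : q ≤ s) (lam : (T s + q).Partition) :
    deg lam ≤ s * (s - 1) + (Nat.sqrt (4 * q + 1) - 1) := by
  have hb := triangular_bound lam
  have ha : gapBonus lam ≤ supp lam := Finset.card_filter_le _ _
  have hm : multBonus lam ≤ supp lam := Finset.card_filter_le _ _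
  unfold deg
  generalize supp lam = r at *
  generalize gapBonus lam = a at *
  generalize multBonus lam = b at *
  have hrs : r ≤ s := by
    by_contra! h
    have h1 := T_mono (show s + 1 ≤ r from h)
    rw [T_succ] at h1
    omega
  rcases hrs.lt_or_eq with h | rfl
  · have h1 : r * (r - 1) + 2 * r ≤ s * (s - 1) := by
      obtain ⟨k, rfl⟩ : ∃ k, s = k + 1 := ⟨s - 1, by omega⟩
      rcases r with _ | r
      · simp
      · simp only [Nat.add_sub_cancel]
        nlinarith
    omega
  · have h1 := two_mul_T a
    have h2 := two_mul_T b
    have h3 : T a + T b ≤ q := by omega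
    have h4 : a + b + 1 ≤ Nat.sqrt (4 * q + 1) := by
      rw [Nat.le_sqrt]
      zify at *
      nlinarith [sq_nonneg ((a : ℤ) - b)]
    omega

lemma sum_Icc_eq_T (m : ℕ) : ∑ x ∈ Finset.Icc 1 m, x = T m := by
  induction m with
  | zero => simp [T]
  | succ k ih => rw [Finset.sum_Icc_succ_top (by omega), ih, T_succ]

/-- The extremal partition (for `1 ≤ k` and `b ≤ k`): `k + a` part sizes, of which the top `a` are preceded by a gap, with
`1, …, b` repeated and the remaining excess `t` spread over copies of `1`. -/
def extremal (k a b t : ℕ) : Multiset ℕ :=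
  (Finset.Icc 1 k).val + (Finset.Icc 1 a).val.map (fun j => k + 2 * j)
    + (Finset.Icc 1 b).val + Multiset.replicate t 1

lemma extremal_sum (k a b t : ℕ) :
    (extremal k a b t).sum = T (k + a) + T a + T b + t := by
  have hk : (Finset.Icc 1 k).val.sum = T k := by
    rw [← sum_Icc_eq_T k, Finset.sum_eq_multiset_sum, Multiset.map_id']
  have hb : (Finset.Icc 1 b).val.sum = T b := by
    rw [← sum_Icc_eq_T b, Finset.sum_eq_multiset_sum, Multiset.map_id']
  have ha : ((Finset.Icc 1 a).val.map (fun j => k + 2 * j)).sum = a * k + 2 * T a := by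
    change ∑ j ∈ Finset.Icc 1 a, (k + 2 * j) = _
    rw [Finset.sum_add_distrib, ← Finset.mul_sum, sum_Icc_eq_T]
    simp
  have h1 := two_mul_T k
  have h2 := two_mul_T a
  have h3 := two_mul_T (k + a)
  simp only [extremal, Multiset.sum_add, hk, ha, hb, Multiset.sum_replicate, smul_eq_mul]
  nlinarith

lemma mem_extremal {k a b t x : ℕ} (hk : 1 ≤ k) (hbk : b ≤ k) :
    x ∈ extremal k a b t ↔
      x ∈ Finset.Icc 1 k ∨ x ∈ (Finset.Icc 1 a).image (fun j => k + 2 * j) := by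
  simp only [extremal, Multiset.mem_add, Multiset.mem_map, Finset.mem_val, Finset.mem_image,
    Multiset.mem_replicate, Finset.mem_Icc]
  constructor
  · rintro (((h | h) | h) | h)
    · exact Or.inl h
    · exact Or.inr h
    · left; omega
    · left; omega
  · rintro (h | h)
    · exact Or.inl (Or.inl (Or.inl h))
    · exact Or.inl (Or.inl (Or.inr h))

lemma exists_deg_ge (k a b t : ℕ) (hk : 1 ≤ k) (hbk : b ≤ k) :
    ∃ lam : (T (k + a) + T a + T b + t).Partition,
      (k + a) * (k + a - 1) + a + b ≤ deg lam := by
  let lam : (T (k + a) + T a + T b + t).Partition :=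
    { parts := extremal k a b t
      parts_pos := by
        intro x hx
        rw [mem_extremal hk hbk] at hx
        simp only [Finset.mem_Icc, Finset.mem_image] at hx
        omega
      parts_sum := extremal_sum k a b t }
  have hparts : lam.parts = extremal k a b t := rfl
  have hinj : Function.Injective (fun j => k + 2 * j) := fun x y h => by
    simp only at h
    omega
  have hfin : lam.parts.toFinset =
      Finset.Icc 1 k ∪ (Finset.Icc 1 a).image (fun j => k + 2 * j) := by
    ext x
    rw [Multiset.mem_toFinset, hparts, mem_extremal hk hbk, Finset.mem_union]
  have hsupp : supp lam = k + a := by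
    rw [supp, hfin, Finset.card_union_of_disjoint, Finset.card_image_of_injective _ hinj]
    · simp
    · rw [Finset.disjoint_left]
      intro x hx hx'
      simp only [Finset.mem_Icc, Finset.mem_image] at hx hx'
      omega
  have hgap : a ≤ gapBonus lam := by
    have hcard : ((Finset.Icc 1 a).image (fun j => k + 2 * j)).card = a := by
      rw [Finset.card_image_of_injective _ hinj]
      simp
    rw [gapBonus]
    conv_lhs => rw [← hcard]
    apply Finset.card_le_card
    intro x hx
    rw [Finset.mem_filter, Multiset.mem_toFinset, hparts, mem_extremal hk hbk,
      mem_extremal hk hbk]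
    refine ⟨Or.inr hx, ?_⟩
    simp only [Finset.mem_Icc, Finset.mem_image] at hx ⊢
    obtain ⟨j, hj, rfl⟩ := hx
    refine ⟨by omega, ?_⟩
    rintro (h | ⟨i, hi, h⟩) <;> omega
  have hmult : b ≤ multBonus lam := by
    have hcard : (Finset.Icc 1 b).card = b := by simp
    rw [multBonus]
    conv_lhs => rw [← hcard]
    apply Finset.card_le_card
    intro x hx
    have hx' : x ∈ Finset.Icc 1 k := by
      rw [Finset.mem_Icc] at hx ⊢
      omega
    rw [Finset.mem_filter, Multiset.mem_toFinset, hparts, mem_extremal hk hbk]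
    refine ⟨Or.inl hx', ?_⟩
    have h1 : 1 ≤ (Finset.Icc 1 k).val.count x := Multiset.one_le_count_iff_mem.2 hx'
    have h2 : 1 ≤ (Finset.Icc 1 b).val.count x := Multiset.one_le_count_iff_mem.2 hx
    simp only [extremal, Multiset.count_add]
    omega
  refine ⟨lam, ?_⟩
  rw [deg, hsupp]
  omega

/-- The balanced split of `√(4 q + 1) - 1` into two summands fits into `q`. -/
lemma exists_balanced (q : ℕ) :
    ∃ a b : ℕ, a ≤ b ∧ a + b = Nat.sqrt (4 * q + 1) - 1 ∧ T a + T b ≤ q := by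
  have hsq := Nat.sqrt_le (4 * q + 1)
  have hpos : 1 ≤ Nat.sqrt (4 * q + 1) := by
    rw [Nat.le_sqrt]
    omega
  obtain ⟨c, hc⟩ : ∃ c, Nat.sqrt (4 * q + 1) = c + 1 := ⟨_, (Nat.sub_add_cancel hpos).symm⟩
  rw [hc] at hsq ⊢
  obtain ⟨k, rfl | rfl⟩ := Nat.even_or_odd' c
  · refine ⟨k, k, le_rfl, by omega, ?_⟩
    have := two_mul_T k
    nlinarith
  · refine ⟨k, k + 1, by omega, by omega, ?_⟩
    have := two_mul_T k
    rw [T_succ]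
    -- Here `4 (k + 1) ^ 2 ≤ 4 q + 1`, and integrality removes the `+ 1`.
    have h : 4 * ((k + 1) * (k + 1)) ≤ 4 * q + 1 := by nlinarith
    have h' : (k + 1) * (k + 1) ≤ q := by omega
    nlinarith

lemma le_T (m : ℕ) : m ≤ T m := by
  have := two_mul_T m
  rcases m with _ | m
  · simp
  · nlinarith

/-- exact maximal degree `Δ_{T s + q} = s(s-1) + ⌊√(4q+1)⌋ - 1`. -/
theorem exact_max_degree (s q : ℕ) (hs : 1 ≤ s) (hqs : q ≤ s) :
    maxDeg (T s + q) = s * (s - 1) + (Nat.sqrt (4 * q + 1) - 1) := by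
  apply le_antisymm
  · exact Finset.sup_le fun lam _ => deg_le s q hqs lam
  · obtain ⟨a, b, hab, hsum, hq⟩ := exists_balanced q
    have ha := le_T a
    have hb := le_T b
    -- Since `a ≤ b` and `a + b ≤ q ≤ s`, the sizes `1, …, b` lie below the first gap and `a < s`.
    obtain ⟨k, rfl⟩ : ∃ k, s = k + a := ⟨s - a, by omega⟩
    obtain ⟨t, rfl⟩ : ∃ t, q = T a + T b + t := ⟨q - (T a + T b), by omega⟩
    obtain ⟨lam, hlam⟩ := exists_deg_ge k a b t (by omega) (by omega)
    rw [← hsum, ← add_assoc]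
    have hn : T (k + a) + T a + T b + t = T (k + a) + (T a + T b + t) := by ring
    rw [← hn]
    exact hlam.trans (Finset.le_sup (f := fun lam => deg lam) (Finset.mem_univ lam))

end PartitionDegree
end
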